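/- In the model Y = Xβ* + ξ with p ≥ n and k* ≤ c·n for an absolute constant c, there exist constants c₁, c₂, c₃ > 0 such that if η > 0 is small enough, then with probability at least 1 − c₁e^{−c₂n}, the minimum ℓ2-norm interpolator β̂ satisfies ‖Σ^{1/2}(β̂ − β*)‖₂² ≤ max( (ρ·r*(η))², c₃‖ξ‖₂²/n ). -/

import Mathlib

open MeasureTheory ProbabilityTheory Matrix Finset
open scoped ENNReal Classical

noncomputable section

/-- Euclidean (`ℓ2`) norm of a finite real vector. -/
def enorm2 {m : ℕ} (v : Fin m → ℝ) : ℝ := Real.sqrt (∑ i, v i ^ 2)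

/-- The prediction (semi-)norm `‖Σ^{1/2} d‖₂ = √(dᵀ Σ d)`. -/
def predNorm {p : ℕ} (Sig : Matrix (Fin p) (Fin p) ℝ) (d : Fin p → ℝ) : ℝ :=
  Real.sqrt (d ⬝ᵥ Sig.mulVec d)

/-- The standard Gaussian measure `N(0, I_p)` on `ℝ^p`. -/
def stdGaussian (p : ℕ) : Measure (Fin p → ℝ) :=
  Measure.pi fun _ : Fin p => gaussianReal 0 1

/-- `Σ^{1/2} = P Λ^{1/2} Pᵀ` built from the eigendecomposition data. -/
def covHalf (p : ℕ) (lam : ℕ → ℝ) (Porth : Matrix (Fin p) (Fin p) ℝ) :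
    Matrix (Fin p) (Fin p) ℝ :=
  Porth * Matrix.diagonal (fun i : Fin p => Real.sqrt (lam ((i : ℕ) + 1))) * Porthᵀ

/-- The Gaussian law `N(0,Σ)` on `ℝ^p`, realized as the pushforward of `N(0,I_p)`
by `g ↦ Σ^{1/2} g`. -/
def mvGaussian (p : ℕ) (lam : ℕ → ℝ) (Porth : Matrix (Fin p) (Fin p) ℝ) :
    Measure (Fin p → ℝ) :=
  Measure.map (fun g => (covHalf p lam Porth).mulVec g) (stdGaussian p)

/-- `r_k(Σ) = ∑_{i=k}^p λ_i(Σ)` (eigenvalues `1`-indexed). -/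
def rsum (p : ℕ) (lam : ℕ → ℝ) (k : ℕ) : ℝ := ∑ i ∈ Finset.Icc k p, lam i

/-- The set `{k ∈ {1,…,p} : r_k(Σ)/λ_k(Σ) ≥ c₀ n}`. -/
def kstarSet (p : ℕ) (lam : ℕ → ℝ) (c0 : ℝ) (n : ℕ) : Set ℕ :=
  {k | 1 ≤ k ∧ k ≤ p ∧ c0 * n ≤ rsum p lam k / lam k}

/-- `k* = inf { k ∈ {1,…,p} : r_k(Σ)/λ_k(Σ) ≥ c₀ n }`. -/
def kstar (p : ℕ) (lam : ℕ → ℝ) (c0 : ℝ) (n : ℕ) : ℕ := sInf (kstarSet p lam c0 n)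

/-- `ρ = ‖β*‖₂ + 4‖ξ‖₂/√(r_{k*}(Σ))`. -/
def rho (p : ℕ) (lam : ℕ → ℝ) (c0 : ℝ) (n : ℕ) (βstar : Fin p → ℝ) (ξnorm : ℝ) : ℝ :=
  enorm2 βstar + 4 * ξnorm / Real.sqrt (rsum p lam (kstar p lam c0 n))

/-- `r*(η) = inf { r > 0 : ∑ᵢ min(λ_i(Σ), r²) ≤ η n r² }`. -/
def rstar (p n : ℕ) (lam : ℕ → ℝ) (η : ℝ) : ℝ :=
  sInf {r : ℝ | 0 < r ∧ ∑ i : Fin p, min (lam ((i : ℕ) + 1)) (r ^ 2) ≤ η * n * r ^ 2}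

/-- `r̄(γ) = sup { r > 0 : ∑ᵢ min(λ_i(Σ)ρ², r²) ≤ γ ‖ξ‖₂² }`. -/
def rbar (p : ℕ) (lam : ℕ → ℝ) (γ ρ ξnorm : ℝ) : ℝ :=
  sSup {r : ℝ | 0 < r ∧ ∑ i : Fin p, min (lam ((i : ℕ) + 1) * ρ ^ 2) (r ^ 2) ≤ γ * ξnorm ^ 2}

/-- `k̄ = inf { k ≥ k* : r_k(Σ) ≤ (γ/2) r_{k*}(Σ) }`, with `k̄ = p+1` if the set is empty. -/
def kbar (p : ℕ) (lam : ℕ → ℝ) (c0 : ℝ) (n : ℕ) (γ : ℝ) : ℕ :=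
  if _h : {k | kstar p lam c0 n ≤ k ∧
      rsum p lam k ≤ γ / 2 * rsum p lam (kstar p lam c0 n)}.Nonempty
  then sInf {k | kstar p lam c0 n ≤ k ∧
      rsum p lam k ≤ γ / 2 * rsum p lam (kstar p lam c0 n)}
  else p + 1

/-- `b` is a minimum `ℓ2`-norm interpolator for the design `M` and responses `Y`. -/
def IsMinInterp {n p : ℕ} (M : Fin n → Fin p → ℝ) (Y : Fin n → ℝ) (b : Fin p → ℝ) : Prop :=
  (∀ i, ∑ j, M i j * b j = Y i) ∧
    ∀ b' : Fin p → ℝ, (∀ i, ∑ j, M i j * b' j = Y i) → enorm2 b ≤ enorm2 b'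

/- In the eigenbasis of `Σ` the design `Z` has independent entries, those in column `j` being
centred Gaussians of variance `λ_j`. An `ε`-net argument and chi-square tail bounds show that, off
an event of exponentially small probability, three things hold: `Zᵀ` is bounded below by
`√(r_{k*}) / 4`, since its columns of index at least `k*` carry variance `r_{k*} ≥ 32 n λ_{k*}`;
`Z` has norm `O(r* √n)` on the coordinates with `λ_j ≤ (r* / 64)²`; and on the few remaining
coordinates `‖Z e‖` dominates `√n / 4` times the prediction norm of `e`.

The first bound gives `‖β̂ - β*‖ ≤ ρ`. If the prediction error exceeds `r* ‖β̂ - β*‖`, the remaining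
coordinates dominate it, so it is `O(1 / √n)` times `‖Z (β̂ - β*)‖ = ‖ξ‖`; otherwise it is at most
`ρ r*`. -/

section Nets

open Metric Module
open scoped NNReal

variable {E F : Type*} [NormedAddCommGroup E] [NormedAddCommGroup F]

lemma exists_norm_sub_le_of_isCover_sphere {ε : ℝ≥0} {N : Set E} (hN : IsCover ε (sphere 0 1) N)
    {v : E} (hv : ‖v‖ = 1) : ∃ u ∈ N, ‖v - u‖ ≤ ε := by
  obtain ⟨u, hu, hvu⟩ := hN (by simpa using hv : v ∈ sphere (0 : E) 1)
  refine ⟨u, hu, ?_⟩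
  rw [← dist_eq_norm]
  exact (edist_le_coe.1 hvu : nndist v u ≤ ε)

variable [NormedSpace ℝ E] [NormedSpace ℝ F]

/- The balls of radius `ε / 2` around the points of `s` are disjoint and lie in the ball of radius
`1 + ε / 2`. -/
lemma card_le_of_isSeparated_of_subset_closedBall [FiniteDimensional ℝ E] {ε : ℝ≥0} (hε : 0 < ε)
    {s : Finset E} (hs : (s : Set E) ⊆ closedBall 0 1) (hsep : IsSeparated ε (s : Set E)) :
    (s.card : ℝ) ≤ (1 + 2 / ε) ^ finrank ℝ E := by
  borelize E
  let μ : Measure E := Measure.addHaar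
  have hε' : (0 : ℝ) < ε := hε
  have hdisj : (s : Set E).PairwiseDisjoint fun x => ball x (ε / 2 : ℝ) := fun x hx y hy hxy => by
    refine ball_disjoint_ball ?_
    have h : (ε : ℝ≥0∞) < edist x y := hsep hx hy hxy
    rw [edist_nndist, ENNReal.coe_lt_coe] at h
    rw [add_halves]
    exact h.le
  have hsub : (⋃ x ∈ s, ball x (ε / 2 : ℝ)) ⊆ ball 0 (1 + ε / 2 : ℝ) :=
    Set.iUnion₂_subset fun x hx => ball_subset_ball' (by
      have := mem_closedBall.1 (hs hx)
      linarith)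
  have hvol : (s.card : ℝ≥0∞) * ENNReal.ofReal ((ε / 2 : ℝ) ^ finrank ℝ E) * μ (ball 0 1) ≤
      ENNReal.ofReal ((1 + ε / 2 : ℝ) ^ finrank ℝ E) * μ (ball 0 1) :=
    calc _ = μ (⋃ x ∈ s, ball x (ε / 2 : ℝ)) := by
          rw [measure_biUnion_finset hdisj fun x _ => measurableSet_ball]
          simp only [μ.addHaar_ball_of_pos _ (half_pos hε'), sum_const, nsmul_eq_mul, mul_assoc]
      _ ≤ μ (ball 0 (1 + ε / 2 : ℝ)) := measure_mono hsub
      _ = _ := μ.addHaar_ball_of_pos _ (by positivity)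
  have hcard := ENNReal.toReal_le_of_le_ofReal (by positivity) <|
    (ENNReal.mul_le_mul_iff_left (measure_ball_pos _ _ zero_lt_one).ne' measure_ball_lt_top.ne).1
      hvol
  rw [ENNReal.toReal_mul, ENNReal.toReal_natCast, ENNReal.toReal_ofReal (by positivity),
    ← le_div_iff₀ (by positivity), ← div_pow] at hcard
  refine hcard.trans_eq (congrArg (· ^ _) ?_)
  field_simp
  ring

lemma exists_finset_isCover_of_subset_closedBall [FiniteDimensional ℝ E] {ε : ℝ≥0} (hε : 0 < ε)
    {s : Set E} (hs : s ⊆ closedBall 0 1) :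
    ∃ N : Finset E, (N : Set E) ⊆ s ∧ IsCover ε s N ∧ (N.card : ℝ) ≤ (1 + 2 / ε) ^ finrank ℝ E := by
  have hcard : ∀ N : Finset E, (N : Set E) ⊆ s → IsSeparated ε (N : Set E) →
      N.card ≤ ⌊(1 + 2 / ε : ℝ) ^ finrank ℝ E⌋₊ := fun N hN hsep =>
    Nat.le_floor (card_le_of_isSeparated_of_subset_closedBall hε (hN.trans hs) hsep)
  have hfin : ∀ C ⊆ s, IsSeparated ε C → C.Finite := fun C hC hsep => by
    by_contra hinf
    obtain ⟨N, hN, hNcard⟩ := Set.Infinite.exists_subset_card_eq hinf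
      (⌊(1 + 2 / ε : ℝ) ^ finrank ℝ E⌋₊ + 1)
    have := hcard N (hN.trans hC) (hsep.subset hN)
    omega
  have hpack : packingNumber ε s ≠ ⊤ := by
    refine ne_top_of_le_ne_top (ENat.natCast_ne_top ⌊(1 + 2 / ε : ℝ) ^ finrank ℝ E⌋₊)
      (iSup₂_le fun C hC => iSup_le fun hsep => ?_)
    lift C to Finset E using hfin C hC hsep
    rw [Set.encard_coe_eq_coe_finsetCard]
    exact_mod_cast hcard C hC hsep
  obtain ⟨N, hN⟩ := (hfin _ (maximalSeparatedSet_subset (ε := ε) (A := s))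
    isSeparated_maximalSeparatedSet).exists_finset_coe
  exact ⟨N, hN ▸ maximalSeparatedSet_subset, hN ▸ isCover_maximalSeparatedSet hpack,
    card_le_of_isSeparated_of_subset_closedBall hε
      ((hN ▸ maximalSeparatedSet_subset : (N : Set E) ⊆ s).trans hs)
      (hN ▸ isSeparated_maximalSeparatedSet)⟩

lemma opNorm_le_of_isCover_sphere {ε : ℝ≥0} (hε : ε < 1) {N : Set E}
    (hN : IsCover ε (sphere 0 1) N) {L : E →L[ℝ] F} {t : ℝ} (ht : 0 ≤ t)
    (hL : ∀ u ∈ N, ‖L u‖ ≤ t) : ‖L‖ ≤ t / (1 - ε) := by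
  have hε' : (ε : ℝ) < 1 := hε
  have hunit : ∀ v : E, ‖v‖ = 1 → ‖L v‖ ≤ t + ε * ‖L‖ := fun v hv => by
    obtain ⟨u, hu, hvu⟩ := exists_norm_sub_le_of_isCover_sphere hN hv
    calc ‖L v‖ = ‖L u + L (v - u)‖ := by rw [map_sub, add_sub_cancel]
      _ ≤ ‖L u‖ + ‖L (v - u)‖ := norm_add_le _ _
      _ ≤ t + ε * ‖L‖ := by
        rw [mul_comm]
        gcongr
        exacts [hL u hu, L.le_opNorm_of_le hvu]
  rw [le_div_iff₀ (sub_pos.2 hε')]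
  have := L.opNorm_le_of_unit_norm (by positivity) hunit
  linarith

lemma le_norm_of_isCover_sphere {ε : ℝ≥0} {N : Set E} (hN : IsCover ε (sphere 0 1) N)
    {L : E →L[ℝ] F} {s : ℝ} (hL : ∀ u ∈ N, s ≤ ‖L u‖) (v : E) :
    (s - ε * ‖L‖) * ‖v‖ ≤ ‖L v‖ := by
  rcases eq_or_ne v 0 with rfl | hv
  · simp
  obtain ⟨u, hu, hvu⟩ := exists_norm_sub_le_of_isCover_sphere hN (norm_smul_inv_norm (𝕜 := ℝ) hv)
  have hclose : ‖L u‖ - ε * ‖L‖ ≤ ‖L ((‖v‖⁻¹ : ℝ) • v)‖ := by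
    have h := norm_sub_norm_le (L u) (L u - L ((‖v‖⁻¹ : ℝ) • v))
    rw [sub_sub_cancel, ← map_sub] at h
    have := L.le_opNorm_of_le ((norm_sub_rev u _).trans_le hvu)
    rw [mul_comm]
    exact (sub_le_sub_left this _).trans h
  rw [map_smul, norm_smul, norm_inv, norm_norm, ← div_eq_inv_mul] at hclose
  rw [← le_div_iff₀ (norm_pos_iff.2 hv)]
  linarith [hL u hu]

variable [FiniteDimensional ℝ E] {Ω : Type*} [MeasurableSpace Ω] {P : Measure Ω}
  {L : Ω → E →L[ℝ] F} {ε : ℝ≥0} {s t : ℝ} {q₁ q₂ : ℝ≥0∞}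

lemma measure_lt_opNorm_le (hε : 0 < ε) (hε1 : ε < 1) (ht : 0 ≤ t)
    (hL : ∀ u, ‖u‖ = 1 → P {ω | t < ‖L ω u‖} ≤ q₁) :
    P {ω | t / (1 - ε) < ‖L ω‖} ≤ ENNReal.ofReal ((1 + 2 / ε) ^ finrank ℝ E) * q₁ := by
  obtain ⟨N, hNs, hN, hcard⟩ := exists_finset_isCover_of_subset_closedBall hε
    (sphere_subset_closedBall (x := (0 : E)) (ε := 1))
  calc P {ω | t / (1 - ε) < ‖L ω‖} ≤ P (⋃ u ∈ N, {ω | t < ‖L ω u‖}) := by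
        refine measure_mono fun ω hω => ?_
        by_contra hnet
        simp only [Set.mem_iUnion, Set.mem_ofPred_eq, exists_prop, not_exists, not_and,
          not_lt] at hnet
        exact (opNorm_le_of_isCover_sphere hε1 hN ht hnet).not_gt hω
    _ ≤ ∑ u ∈ N, P {ω | t < ‖L ω u‖} := measure_biUnion_finset_le _ _
    _ ≤ ∑ _u ∈ N, q₁ := sum_le_sum fun u hu => hL u (by simpa using hNs hu)
    _ ≤ _ := by
      rw [sum_const, nsmul_eq_mul, ← ENNReal.ofReal_natCast]
      gcongr

lemma measure_not_le_norm_le (hε : 0 < ε) (hε1 : ε < 1) (ht : 0 ≤ t)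
    (hL : ∀ u, ‖u‖ = 1 → P {ω | t < ‖L ω u‖} ≤ q₁)
    (hL' : ∀ u, ‖u‖ = 1 → P {ω | ‖L ω u‖ < s} ≤ q₂) :
    P {ω | ¬ ∀ v, (s - ε * (t / (1 - ε))) * ‖v‖ ≤ ‖L ω v‖} ≤
      ENNReal.ofReal ((1 + 2 / ε) ^ finrank ℝ E) * (q₁ + q₂) := by
  obtain ⟨N, hNs, hN, hcard⟩ := exists_finset_isCover_of_subset_closedBall hε
    (sphere_subset_closedBall (x := (0 : E)) (ε := 1))
  calc P {ω | ¬ ∀ v, (s - ε * (t / (1 - ε))) * ‖v‖ ≤ ‖L ω v‖}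
      ≤ P (⋃ u ∈ N, {ω | t < ‖L ω u‖} ∪ {ω | ‖L ω u‖ < s}) := by
        refine measure_mono fun ω hω => ?_
        by_contra hnet
        simp only [Set.mem_iUnion, Set.mem_union, Set.mem_ofPred_eq, exists_prop, not_exists,
          not_and, not_or, not_lt] at hnet
        refine hω fun v => le_trans ?_ (le_norm_of_isCover_sphere hN (fun u hu => (hnet u hu).2) v)
        gcongr
        exact opNorm_le_of_isCover_sphere hε1 hN ht fun u hu => (hnet u hu).1
    _ ≤ ∑ u ∈ N, P ({ω | t < ‖L ω u‖} ∪ {ω | ‖L ω u‖ < s}) := measure_biUnion_finset_le _ _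
    _ ≤ ∑ _u ∈ N, (q₁ + q₂) := sum_le_sum fun u hu => (measure_union_le _ _).trans <|
        add_le_add (hL u (by simpa using hNs hu)) (hL' u (by simpa using hNs hu))
    _ ≤ _ := by
      rw [sum_const, nsmul_eq_mul, ← ENNReal.ofReal_natCast]
      gcongr

end Nets

section ChiSquare

open scoped NNReal

lemma inv_sqrt_one_sub_le_exp {x : ℝ} (hx0 : 0 ≤ x) (hx : x ≤ 1 / 2) :
    (√(1 - x))⁻¹ ≤ Real.exp x := by
  rw [inv_le_comm₀ (Real.sqrt_pos.2 (by linarith)) (Real.exp_pos _), ← Real.exp_neg]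
  refine Real.le_sqrt_of_sq_le ?_
  calc Real.exp (-x) ^ 2 = (Real.exp (2 * x))⁻¹ := by
        rw [← Real.exp_nat_mul, ← Real.exp_neg]
        push_cast
        ring_nf
    _ ≤ (1 + 2 * x)⁻¹ := by
      gcongr
      linarith [Real.add_one_le_exp (2 * x)]
    _ ≤ 1 - x := by
      rw [inv_le_iff_one_le_mul₀ (by linarith)]
      nlinarith

lemma inv_sqrt_one_add_le_exp {x : ℝ} (hx0 : 0 ≤ x) (hx : x ≤ 1) :
    (√(1 + x))⁻¹ ≤ Real.exp (-(x / 4)) := by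
  rw [Real.exp_neg]
  gcongr
  refine Real.le_sqrt_of_sq_le ?_
  calc Real.exp (x / 4) ^ 2 = Real.exp (x / 2) := by
        rw [← Real.exp_nat_mul]
        push_cast
        ring_nf
    _ ≤ 1 / (1 - x / 2) := Real.exp_bound_div_one_sub_of_interval (by linarith) (by linarith)
    _ ≤ 1 + x := by
      rw [div_le_iff₀ (by linarith)]
      nlinarith

lemma gaussianReal_zero_eq_map (v : ℝ≥0) :
    gaussianReal 0 v = (gaussianReal 0 1).map (√(v : ℝ) * ·) := by
  rw [gaussianReal_map_const_mul, mul_zero, mul_one]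
  congr
  exact NNReal.eq (Real.sq_sqrt v.coe_nonneg).symm

lemma gaussianPDFReal_smul_exp_mul_sq (s x : ℝ) :
    gaussianPDFReal 0 1 x • Real.exp (s * x ^ 2) =
      (√(2 * Real.pi))⁻¹ * Real.exp (-(1 / 2 - s) * x ^ 2) := by
  simp only [gaussianPDFReal, smul_eq_mul, NNReal.coe_one, mul_one, sub_zero]
  rw [mul_assoc, ← Real.exp_add]
  ring_nf

lemma integrable_exp_mul_sq_gaussianReal {v : ℝ≥0} {s : ℝ} (hs : 2 * s * v < 1) :
    Integrable (fun x : ℝ => Real.exp (s * x ^ 2)) (gaussianReal 0 v) := by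
  rw [gaussianReal_zero_eq_map, integrable_map_measure (by fun_prop) (by fun_prop),
    gaussianReal_of_var_ne_zero _ one_ne_zero,
    integrable_withDensity_iff_integrable_smul' (measurable_gaussianPDF _ _)
      (ae_of_all _ fun _ => gaussianPDF_lt_top)]
  refine ((integrable_exp_neg_mul_sq (b := 1 / 2 - s * v) (by linarith)).const_mul
    (√(2 * Real.pi))⁻¹).congr (ae_of_all _ fun x => ?_)
  simp only [← gaussianPDFReal_smul_exp_mul_sq, toReal_gaussianPDF, Function.comp_apply, mul_pow,
    Real.sq_sqrt v.coe_nonneg, mul_assoc]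

lemma integral_exp_mul_sq_gaussianReal {v : ℝ≥0} {s : ℝ} (hs : 2 * s * v < 1) :
    ∫ x : ℝ, Real.exp (s * x ^ 2) ∂(gaussianReal 0 v) = (√(1 - 2 * s * v))⁻¹ := by
  rw [gaussianReal_zero_eq_map, integral_map (by fun_prop) (by fun_prop),
    integral_gaussianReal_eq_integral_smul one_ne_zero]
  simp_rw [mul_pow, Real.sq_sqrt v.coe_nonneg, ← mul_assoc s, gaussianPDFReal_smul_exp_mul_sq]
  have hpos : 0 < 1 - 2 * s * v := by linarith
  rw [integral_const_mul, integral_gaussian, ← Real.sqrt_inv, ← Real.sqrt_mul (by positivity),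
    ← Real.sqrt_inv]
  congr 1
  rw [show (1 : ℝ) / 2 - s * v = (1 - 2 * s * v) / 2 by ring]
  field_simp

variable {κ : Type*} [Fintype κ] {v : κ → ℝ≥0} {b T : ℝ}

lemma integrable_exp_mul_sum_sq_pi_gaussianReal {s : ℝ} (hs : ∀ j, 2 * s * v j < 1) :
    Integrable (fun h : κ → ℝ => Real.exp (s * ∑ j, h j ^ 2))
      (Measure.pi fun j => gaussianReal 0 (v j)) := by
  simp_rw [mul_sum, Real.exp_sum]
  exact Integrable.fintype_prod fun j => integrable_exp_mul_sq_gaussianReal (hs j)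

lemma mgf_sum_sq_pi_gaussianReal {s : ℝ} (hs : ∀ j, 2 * s * v j < 1) :
    mgf (fun h : κ → ℝ => ∑ j, h j ^ 2) (Measure.pi fun j => gaussianReal 0 (v j)) s =
      ∏ j, (√(1 - 2 * s * v j))⁻¹ := by
  simp_rw [mgf, mul_sum, Real.exp_sum]
  rw [integral_fintype_prod_eq_prod (f := fun _ (x : ℝ) => Real.exp (s * x ^ 2))]
  exact prod_congr rfl fun j _ => integral_exp_mul_sq_gaussianReal (hs j)

lemma pi_gaussianReal_four_mul_le_sum_sq (hb : 0 < b) (hvb : ∀ j, v j ≤ b)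
    (hT : ∑ j, (v j : ℝ) ≤ T) :
    (Measure.pi fun j => gaussianReal 0 (v j)) {h | 4 * T ≤ ∑ j, h j ^ 2} ≤
      ENNReal.ofReal (Real.exp (-(T / (2 * b)))) := by
  have hvb' : ∀ j, v j / (2 * b) ≤ 1 / 2 := fun j => by
    rw [div_le_div_iff₀ (by positivity) two_pos]
    linarith [hvb j]
  have hsv : ∀ j, 2 * (1 / (4 * b)) * v j = v j / (2 * b) := fun j => by field_simp; norm_num
  have hs : ∀ j, 2 * (1 / (4 * b)) * v j < 1 := fun j => by linarith [hsv j, hvb' j]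
  rw [← ofReal_measureReal]
  refine ENNReal.ofReal_le_ofReal ((measure_ge_le_exp_mul_mgf (4 * T) (t := 1 / (4 * b))
    (by positivity) (integrable_exp_mul_sum_sq_pi_gaussianReal hs)).trans ?_)
  rw [mgf_sum_sq_pi_gaussianReal hs]
  calc _ ≤ Real.exp (-(1 / (4 * b)) * (4 * T)) * ∏ j, Real.exp (v j / (2 * b)) := by
        gcongr with j
        rw [hsv]
        exact inv_sqrt_one_sub_le_exp (by positivity) (hvb' j)
    _ = Real.exp (-(T / b) + (∑ j, (v j : ℝ)) / (2 * b)) := by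
        rw [← Real.exp_sum, ← Real.exp_add, sum_div]
        congr 2
        field_simp
    _ ≤ Real.exp (-(T / b) + T / (2 * b)) := by gcongr
    _ = _ := by
        congr 1
        field_simp
        norm_num

lemma pi_gaussianReal_sum_sq_le_div_four (hb : 0 < b) (hvb : ∀ j, v j ≤ b)
    (hT : T ≤ ∑ j, (v j : ℝ)) :
    (Measure.pi fun j => gaussianReal 0 (v j)) {h | ∑ j, h j ^ 2 ≤ T / 4} ≤
      ENNReal.ofReal (Real.exp (-(T / (8 * b)))) := by
  have hvb' : ∀ j, v j / b ≤ 1 := fun j => (div_le_one hb).2 (hvb j)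
  have hsv : ∀ j, 2 * (-(1 / (2 * b))) * v j = -(v j / b) := fun j => by field_simp
  have hs : ∀ j, 2 * (-(1 / (2 * b))) * v j < 1 := fun j => by
    rw [hsv]
    have : 0 ≤ v j / b := by positivity
    linarith
  rw [← ofReal_measureReal]
  refine ENNReal.ofReal_le_ofReal ((measure_le_le_exp_mul_mgf (T / 4) (t := -(1 / (2 * b)))
    (by rw [neg_nonpos]; positivity) (integrable_exp_mul_sum_sq_pi_gaussianReal hs)).trans ?_)
  rw [mgf_sum_sq_pi_gaussianReal hs]
  calc _ ≤ Real.exp (-(-(1 / (2 * b))) * (T / 4)) * ∏ j, Real.exp (-(v j / b / 4)) := by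
        gcongr with j
        rw [hsv, sub_neg_eq_add]
        exact inv_sqrt_one_add_le_exp (by positivity) (hvb' j)
    _ = Real.exp (T / (8 * b) - (∑ j, (v j : ℝ)) / (4 * b)) := by
        rw [← Real.exp_sum, ← Real.exp_add, sum_neg_distrib, ← sub_eq_add_neg, sum_div]
        congr 1
        simp_rw [div_div]
        ring_nf
    _ ≤ Real.exp (T / (8 * b) - T / (4 * b)) := by gcongr
    _ = _ := by
        congr 1
        field_simp
        norm_num

end ChiSquare

section GaussianLinearMap

open Module
open scoped NNReal

variable {Ω κ : Type*} [MeasurableSpace Ω] {P : Measure Ω} [Fintype κ] {v : κ → ℝ≥0} {b T : ℝ}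

lemma measure_two_mul_sqrt_lt_norm_le {Y : Ω → EuclideanSpace ℝ κ}
    (hY : HasLaw (fun ω => (Y ω).ofLp) (Measure.pi fun j => gaussianReal 0 (v j)) P) (hb : 0 < b)
    (hvb : ∀ j, v j ≤ b) (hT : ∑ j, (v j : ℝ) ≤ T) :
    P {ω | 2 * √T < ‖Y ω‖} ≤ ENNReal.ofReal (Real.exp (-(T / (2 * b)))) := by
  refine le_trans (measure_mono fun ω hω => ?_) ((hY.measure_eq
    (p := fun h => 4 * T ≤ ∑ j, h j ^ 2) (measurableSet_le (by fun_prop) (by fun_prop))).trans_le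
      (pi_gaussianReal_four_mul_le_sum_sq hb hvb hT))
  have hT0 : 0 ≤ T := hT.trans' (by positivity)
  calc 4 * T = (2 * √T) ^ 2 := by rw [mul_pow, Real.sq_sqrt hT0]; norm_num
    _ ≤ ‖Y ω‖ ^ 2 := by gcongr; exact le_of_lt hω
    _ = ∑ j, Y ω j ^ 2 := EuclideanSpace.real_norm_sq_eq _

lemma measure_norm_lt_sqrt_div_two_le {Y : Ω → EuclideanSpace ℝ κ}
    (hY : HasLaw (fun ω => (Y ω).ofLp) (Measure.pi fun j => gaussianReal 0 (v j)) P) (hb : 0 < b)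
    (hvb : ∀ j, v j ≤ b) (hT : T ≤ ∑ j, (v j : ℝ)) :
    P {ω | ‖Y ω‖ < √T / 2} ≤ ENNReal.ofReal (Real.exp (-(T / (8 * b)))) := by
  refine le_trans (measure_mono fun ω hω => ?_) ((hY.measure_eq
    (p := fun h => ∑ j, h j ^ 2 ≤ T / 4) (measurableSet_le (by fun_prop) (by fun_prop))).trans_le
      (pi_gaussianReal_sum_sq_le_div_four hb hvb hT))
  have hlt : (‖Y ω‖ * 2) ^ 2 < T :=
    (Real.lt_sqrt (by positivity)).1 ((lt_div_iff₀ two_pos).1 hω)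
  calc ∑ j, Y ω j ^ 2 = ‖Y ω‖ ^ 2 := (EuclideanSpace.real_norm_sq_eq _).symm
    _ ≤ T / 4 := by linarith

lemma one_add_two_div_inv_nine_pow_le (d : ℕ) :
    (1 + 2 / ((1 / 9 : ℝ≥0) : ℝ)) ^ d ≤ Real.exp (3 * d) := by
  rw [mul_comm, Real.exp_nat_mul]
  gcongr
  calc 1 + 2 / ((1 / 9 : ℝ≥0) : ℝ) ≤ 2.7182818283 ^ 3 := by norm_num
    _ ≤ Real.exp 1 ^ 3 := by gcongr; exact Real.exp_one_gt_d9.le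
    _ = Real.exp 3 := by rw [← Real.exp_nat_mul]; norm_num

variable {E : Type*} [NormedAddCommGroup E] [NormedSpace ℝ E] [FiniteDimensional ℝ E]
  {L : Ω → E →L[ℝ] EuclideanSpace ℝ κ}

lemma measure_sqrt_lt_opNorm_le
    (hL : ∀ u, ‖u‖ = 1 →
      HasLaw (fun ω => (L ω u).ofLp) (Measure.pi fun j => gaussianReal 0 (v j)) P)
    (hb : 0 < b) (hvb : ∀ j, v j ≤ b) (hT : ∑ j, (v j : ℝ) ≤ T) :
    P {ω | 9 / 4 * √T < ‖L ω‖} ≤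
      ENNReal.ofReal (Real.exp (3 * finrank ℝ E - T / (2 * b))) := by
  have hnet := measure_lt_opNorm_le (ε := 1 / 9) (t := 2 * √T) (by norm_num)
    (NNReal.coe_lt_coe.1 (by norm_num)) (by positivity)
    fun u hu => measure_two_mul_sqrt_lt_norm_le (hL u hu) hb hvb hT
  have hε : 2 * √T / (1 - ((1 / 9 : ℝ≥0) : ℝ)) = 9 / 4 * √T := by push_cast; ring
  rw [hε, ← ENNReal.ofReal_mul (by positivity)] at hnet
  refine hnet.trans (ENNReal.ofReal_le_ofReal ?_)
  rw [sub_eq_add_neg, Real.exp_add]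
  gcongr
  exact one_add_two_div_inv_nine_pow_le _

lemma measure_not_sqrt_mul_norm_le_norm_le
    (hL : ∀ u, ‖u‖ = 1 →
      HasLaw (fun ω => (L ω u).ofLp) (Measure.pi fun j => gaussianReal 0 (v j)) P)
    (hb : 0 < b) (hvb : ∀ j, v j ≤ b) (hT : T = ∑ j, (v j : ℝ)) :
    P {ω | ¬ ∀ u, √T / 4 * ‖u‖ ≤ ‖L ω u‖} ≤
      ENNReal.ofReal (2 * Real.exp (3 * finrank ℝ E - T / (8 * b))) := by
  have hT0 : 0 ≤ T := hT ▸ by positivity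
  have hnet := measure_not_le_norm_le (ε := 1 / 9) (s := √T / 2) (t := 2 * √T) (by norm_num)
    (NNReal.coe_lt_coe.1 (by norm_num)) (by positivity)
    (fun u hu => (measure_two_mul_sqrt_lt_norm_le (hL u hu) hb hvb hT.ge).trans
      (ENNReal.ofReal_le_ofReal
        (by gcongr; norm_num : _ ≤ Real.exp (-(T / (8 * b))))))
    fun u hu => measure_norm_lt_sqrt_div_two_le (hL u hu) hb hvb hT.le
  have hε : √T / 2 - ((1 / 9 : ℝ≥0) : ℝ) * (2 * √T / (1 - ((1 / 9 : ℝ≥0) : ℝ))) = √T / 4 := by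
    push_cast; ring
  rw [hε, ← ENNReal.ofReal_add (by positivity) (by positivity), ← two_mul,
    ← ENNReal.ofReal_mul (by positivity)] at hnet
  refine hnet.trans (ENNReal.ofReal_le_ofReal ?_)
  rw [sub_eq_add_neg, Real.exp_add, mul_left_comm]
  gcongr
  exact one_add_two_div_inv_nine_pow_le _

end GaussianLinearMap

section GaussianMatrix

open scoped NNReal

variable {ι κ : Type*} [Fintype ι] [Fintype κ]

lemma pi_pi_map_swap {X : Type*} [MeasurableSpace X] (μ : ι → κ → Measure X)
    [∀ i j, IsProbabilityMeasure (μ i j)] :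
    (Measure.pi fun i => Measure.pi fun j => μ i j).map Function.swap =
      Measure.pi fun j => Measure.pi fun i => μ i j := by
  simp_rw [← Measure.infinitePi_eq_pi]
  rw [← Measure.infinitePi_map_curry, ← Measure.infinitePi_map_curry (fun j i => μ i j),
    ← Measure.infinitePi_map_piCongrLeft (fun q : κ × ι => μ q.2 q.1) (Equiv.prodComm ι κ),
    Measure.map_map (by fun_prop) (by fun_prop), Measure.map_map (by fun_prop) (by fun_prop)]
  congr 1

lemma measurePreserving_mulVec_pi_gaussianReal [DecidableEq ι] [DecidableEq κ] {v : κ → ℝ≥0}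
    {w : ι → ℝ≥0} {A : Matrix ι κ ℝ}
    (hA : A * diagonal (fun j => (v j : ℝ)) * Aᵀ = diagonal fun i => (w i : ℝ)) :
    MeasurePreserving (A *ᵥ ·) (Measure.pi fun j => gaussianReal 0 (v j))
      (Measure.pi fun i => gaussianReal 0 (w i)) := by
  refine ⟨by fun_prop, ?_⟩
  have := Measure.isProbabilityMeasure_map (μ := Measure.pi fun j => gaussianReal 0 (v j))
    (f := (A *ᵥ ·)) (by fun_prop)
  refine charFun_eq_pi_iff.1 fun t => ?_
  have hadj : charFun (((Measure.pi fun j => gaussianReal 0 (v j)).map (A *ᵥ ·)).map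
      (WithLp.toLp 2)) t =
      charFun ((Measure.pi fun j => gaussianReal 0 (v j)).map (WithLp.toLp 2))
        (WithLp.toLp 2 (Aᵀ *ᵥ t.ofLp)) := by
    simp_rw [charFun_apply]
    rw [Measure.map_map (by fun_prop) (by fun_prop), integral_map (by fun_prop) (by fun_prop),
      integral_map (by fun_prop) (by fun_prop)]
    simp [EuclideanSpace.inner_eq_star_dotProduct, mulVec_transpose, dotProduct_mulVec]
  have hvar : ∑ j, (v j : ℝ) * (Aᵀ *ᵥ t.ofLp) j ^ 2 = ∑ i, (w i : ℝ) * t i ^ 2 := by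
    have h := congrArg (fun M => t.ofLp ⬝ᵥ M *ᵥ t.ofLp) hA
    rw [← mulVec_mulVec, ← mulVec_mulVec, dotProduct_mulVec, ← mulVec_transpose] at h
    simp only [dotProduct, mulVec_diagonal] at h
    calc _ = _ := sum_congr rfl fun j _ => by ring
      _ = _ := h
      _ = _ := sum_congr rfl fun i _ => by ring
  rw [hadj, charFun_pi]
  simp only [charFun_gaussianReal, ← Complex.exp_sum]
  have hvar' := congrArg (fun s : ℝ => Complex.exp (-(s / 2 : ℝ))) hvar
  push_cast [sum_div, ← sum_neg_distrib] at hvar'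
  simpa using hvar'

lemma measurePreserving_dotProduct_pi_gaussianReal {v : κ → ℝ≥0} {σ : ℝ≥0} {e : κ → ℝ}
    (he : ∑ j, v j * e j ^ 2 = σ) :
    MeasurePreserving (· ⬝ᵥ e) (Measure.pi fun j => gaussianReal 0 (v j)) (gaussianReal 0 σ) := by
  have hA : replicateRow Unit e * diagonal (fun j => (v j : ℝ)) * (replicateRow Unit e)ᵀ =
      diagonal fun _ => (σ : ℝ) := by
    ext
    rw [mul_apply, diagonal_apply_eq, ← he]
    simp only [mul_diagonal, replicateRow_apply, transpose_apply]
    exact sum_congr rfl fun j _ => by ring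
  convert (measurePreserving_eval _ ()).comp (measurePreserving_mulVec_pi_gaussianReal hA) using 1
  ext h
  simp [mulVec, dotProduct_comm]

/-- The law of a random matrix with independent centred Gaussian entries, those in column `j`
having variance `v j`. It is a measure on functions because `Matrix` carries no `MeasurableSpace`
instance. -/
def gaussianMatrix (ι : Type*) [Fintype ι] (v : κ → ℝ≥0) : Measure (ι → κ → ℝ) :=
  Measure.pi fun _ => Measure.pi fun j => gaussianReal 0 (v j)

lemma measurePreserving_submatrix_gaussianMatrix {κ' : Type*} [Fintype κ'] (v : κ → ℝ≥0)
    {f : κ' → κ} (hf : Function.Injective f) :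
    MeasurePreserving (fun Z i => Z i ∘ f) (gaussianMatrix ι v) (gaussianMatrix ι (v ∘ f)) := by
  have hA : (1 : Matrix κ κ ℝ).submatrix f id * diagonal (fun j => (v j : ℝ)) *
      ((1 : Matrix κ κ ℝ).submatrix f id)ᵀ = diagonal fun j => ((v ∘ f) j : ℝ) := by
    ext i j
    simp +contextual [mul_apply, one_apply, diagonal_apply, hf.eq_iff]
  convert measurePreserving_pi _ _ fun _ : ι => measurePreserving_mulVec_pi_gaussianReal hA using 0
  refine iff_of_eq (congrArg (MeasurePreserving · _ _) ?_)
  ext Z i j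
  simp [mulVec, dotProduct, one_apply]

lemma measurePreserving_mulVec_gaussianMatrix {v : κ → ℝ≥0} {σ : ℝ≥0} {e : κ → ℝ}
    (he : ∑ j, v j * e j ^ 2 = σ) :
    MeasurePreserving (fun Z => of Z *ᵥ e) (gaussianMatrix ι v)
      (Measure.pi fun _ => gaussianReal 0 σ) :=
  measurePreserving_pi _ _ fun _ => measurePreserving_dotProduct_pi_gaussianReal he

lemma measurePreserving_vecMul_gaussianMatrix (v : κ → ℝ≥0) {u : ι → ℝ} (hu : ∑ i, u i ^ 2 = 1) :
    MeasurePreserving (fun Z => u ᵥ* of Z) (gaussianMatrix ι v)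
      (Measure.pi fun j => gaussianReal 0 (v j)) := by
  have hcol (j : κ) : ∑ i, (v j : ℝ) * u i ^ 2 = v j := by rw [← mul_sum, hu, mul_one]
  have hswap : MeasurePreserving Function.swap (gaussianMatrix ι v)
      (Measure.pi fun j => Measure.pi fun _ : ι => gaussianReal 0 (v j)) :=
    ⟨by fun_prop, pi_pi_map_swap fun _ j => gaussianReal 0 (v j)⟩
  convert (measurePreserving_pi _ _ fun j =>
    measurePreserving_dotProduct_pi_gaussianReal (hcol j)).comp hswap using 1
  ext Z j
  exact dotProduct_comm _ _

variable {Ω : Type*} [MeasurableSpace Ω] {P : Measure Ω} {Z : Ω → ι → κ → ℝ}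
  {v : κ → ℝ≥0}

lemma measure_not_sqrt_mul_norm_le_norm_toEuclideanLin [DecidableEq κ]
    (hZ : HasLaw Z (gaussianMatrix ι v) P) (hv : ∀ j, 0 < v j) :
    P {ω | ¬ ∀ e : EuclideanSpace ℝ κ, √(Fintype.card ι) / 4 * √(∑ j, v j * e j ^ 2) ≤
        ‖toEuclideanLin (of (Z ω)) e‖} ≤
      ENNReal.ofReal (2 * Real.exp (3 * Fintype.card κ - Fintype.card ι / 8)) := by
  have hlaw (u : EuclideanSpace ℝ κ) (hu : ‖u‖ = 1) :
      HasLaw (fun ω => of (Z ω) *ᵥ (diagonal (fun j => (√(v j : ℝ))⁻¹) *ᵥ u))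
        (Measure.pi fun _ => gaussianReal 0 1) P := by
    refine (measurePreserving_mulVec_gaussianMatrix ?_).comp_hasLaw hZ
    rw [NNReal.coe_one, ← one_pow 2, ← hu, EuclideanSpace.real_norm_sq_eq]
    refine sum_congr rfl fun j _ => ?_
    rw [mulVec_diagonal, mul_pow, inv_pow, Real.sq_sqrt (v j).coe_nonneg,
      mul_inv_cancel_left₀ (NNReal.coe_ne_zero.2 (hv j).ne')]
  have h := measure_not_sqrt_mul_norm_le_norm_le (b := 1) (T := Fintype.card ι)
    (L := fun ω => (toEuclideanLin
      (of (Z ω) * diagonal fun j => (√(v j : ℝ))⁻¹)).toContinuousLinearMap)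
    (fun u hu => by simpa using hlaw u hu) one_pos (by simp) (by simp)
  rw [finrank_euclideanSpace, mul_one] at h
  refine (measure_mono fun ω => mt fun hle e => ?_).trans h
  let u : EuclideanSpace ℝ κ := WithLp.toLp 2 fun j => √(v j : ℝ) * e j
  have hu : ‖u‖ = √(∑ j, v j * e j ^ 2) := by
    simp_rw [EuclideanSpace.norm_eq, u, Real.norm_eq_abs, sq_abs, mul_pow,
      Real.sq_sqrt (v _).coe_nonneg]
  have hLu : (diagonal fun j => (√(v j : ℝ))⁻¹) *ᵥ u.ofLp = e.ofLp := by
    ext j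
    have : √(v j : ℝ) ≠ 0 := by simpa using (hv j).ne'
    simp [u, mulVec_diagonal, this]
  have h := hle u
  rwa [hu, LinearMap.coe_toContinuousLinearMap', toLpLin_apply, ← mulVec_mulVec, hLu,
    ← toLpLin_apply] at h

variable {b T : ℝ}

lemma hasLaw_toEuclideanLin_transpose [DecidableEq ι] (hZ : HasLaw Z (gaussianMatrix ι v) P)
    {u : EuclideanSpace ℝ ι} (hu : ‖u‖ = 1) :
    HasLaw (fun ω => (toEuclideanLin (of (Z ω))ᵀ u).ofLp)
      (Measure.pi fun j => gaussianReal 0 (v j)) P := by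
  have hu' : ∑ i, u i ^ 2 = 1 := by rw [← EuclideanSpace.real_norm_sq_eq, hu, one_pow]
  simpa [mulVec_transpose] using
    (measurePreserving_vecMul_gaussianMatrix v hu').fun_comp_hasLaw hZ

lemma measure_not_sqrt_mul_norm_le_norm_transpose [DecidableEq ι]
    (hZ : HasLaw Z (gaussianMatrix ι v) P) (hb : 0 < b) (hvb : ∀ j, v j ≤ b)
    (hT : T = ∑ j, (v j : ℝ)) :
    P {ω | ¬ ∀ u, √T / 4 * ‖u‖ ≤ ‖toEuclideanLin (of (Z ω))ᵀ u‖} ≤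
      ENNReal.ofReal (2 * Real.exp (3 * Fintype.card ι - T / (8 * b))) := by
  rw [← finrank_euclideanSpace (𝕜 := ℝ)]
  exact measure_not_sqrt_mul_norm_le_norm_le
    (L := fun ω => (toEuclideanLin (of (Z ω))ᵀ).toContinuousLinearMap)
    (fun u hu => hasLaw_toEuclideanLin_transpose hZ hu) hb hvb hT

lemma measure_not_norm_le_sqrt_mul_norm [DecidableEq κ] (hZ : HasLaw Z (gaussianMatrix ι v) P)
    (hb : 0 < b) (hvb : ∀ j, v j ≤ b) (hT : ∑ j, (v j : ℝ) ≤ T) :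
    P {ω | ¬ ∀ e, ‖toEuclideanLin (of (Z ω)) e‖ ≤ 9 / 4 * √T * ‖e‖} ≤
      ENNReal.ofReal (Real.exp (3 * Fintype.card ι - T / (2 * b))) := by
  rw [← finrank_euclideanSpace (𝕜 := ℝ)]
  refine (measure_mono fun ω hω => ?_).trans (measure_sqrt_lt_opNorm_le
    (L := fun ω => (toEuclideanLin (of (Z ω))ᵀ).toContinuousLinearMap)
    (fun u hu => hasLaw_toEuclideanLin_transpose hZ hu) hb hvb hT)
  by_contra hle
  have hadj : toEuclideanLin (of (Z ω)) =
      ((toEuclideanLin (of (Z ω))ᵀ).toContinuousLinearMap.adjoint : _ →ₗ[ℝ] _) := by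
    rw [← LinearMap.adjoint_eq_toCLM_adjoint, ← toEuclideanLin_conjTranspose_eq_adjoint,
      conjTranspose_eq_transpose_of_trivial, transpose_transpose]
  refine hω fun e => ?_
  rw [hadj]
  refine ContinuousLinearMap.le_of_opNorm_le _ ?_ e
  rw [LinearIsometryEquiv.norm_map]
  exact not_lt.1 hle

end GaussianMatrix

section MinNormInterpolator

open scoped InnerProductSpace

variable {E F : Type*} [NormedAddCommGroup E] [InnerProductSpace ℝ E] [FiniteDimensional ℝ E]
  [NormedAddCommGroup F] [InnerProductSpace ℝ F] [FiniteDimensional ℝ F] {L : E →ₗ[ℝ] F} {σ : ℝ}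

lemma norm_adjoint_le_div (hσ : 0 < σ) (hL : ∀ u, σ * ‖u‖ ≤ ‖L.adjoint u‖) (u : F) :
    ‖L.adjoint u‖ ≤ ‖L (L.adjoint u)‖ / σ := by
  rcases (norm_nonneg (L.adjoint u)).eq_or_lt with h0 | hpos
  · rw [← h0]
    positivity
  refine (le_div_iff₀ hσ).2 (le_of_mul_le_mul_left ?_ hpos)
  calc ‖L.adjoint u‖ * (‖L.adjoint u‖ * σ) = σ * ⟪u, L (L.adjoint u)⟫_ℝ := by
        rw [← LinearMap.adjoint_inner_left, real_inner_self_eq_norm_sq]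
        ring
    _ ≤ σ * (‖u‖ * ‖L (L.adjoint u)‖) := by gcongr; exact real_inner_le_norm _ _
    _ = σ * ‖u‖ * ‖L (L.adjoint u)‖ := (mul_assoc _ _ _).symm
    _ ≤ ‖L.adjoint u‖ * ‖L (L.adjoint u)‖ := by gcongr; exact hL u

lemma surjective_comp_adjoint (hσ : 0 < σ) (hL : ∀ u, σ * ‖u‖ ≤ ‖L.adjoint u‖) :
    Function.Surjective (L ∘ₗ L.adjoint) := by
  refine LinearMap.injective_iff_surjective.1 ((injective_iff_map_eq_zero _).2 fun u hu => ?_)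
  have h : ‖u‖ ≤ 0 := by
    refine nonpos_of_mul_nonpos_right ((hL u).trans ?_) hσ
    simpa [show L (L.adjoint u) = 0 from hu] using norm_adjoint_le_div hσ hL u
  exact norm_le_zero_iff.1 h

lemma exists_adjoint_eq_of_forall_norm_le (hL : Function.Surjective (L ∘ₗ L.adjoint)) {b : E}
    (hb : ∀ b', L b' = L b → ‖b‖ ≤ ‖b'‖) : ∃ w, L.adjoint w = b := by
  obtain ⟨w, hw⟩ := hL (L b)
  have hLw : L (L.adjoint w) = L b := hw
  have horth : ⟪L.adjoint w, b - L.adjoint w⟫_ℝ = 0 := by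
    rw [LinearMap.adjoint_inner_left, map_sub, hLw, sub_self, inner_zero_right]
  have hpyth := norm_add_sq_eq_norm_sq_add_norm_sq_real horth
  rw [add_sub_cancel] at hpyth
  have hle := mul_self_le_mul_self (norm_nonneg _) (hb _ hLw)
  have hzero : ‖b - L.adjoint w‖ = 0 := mul_self_eq_zero.1
    (le_antisymm (by linarith) (mul_self_nonneg _))
  exact ⟨w, (sub_eq_zero.1 (norm_eq_zero.1 hzero)).symm⟩

/- Modulo `ker L`, the error of a minimum norm interpolator is the preimage of the noise in
`range L†`; the remaining part is the projection of the signal onto `ker L`. -/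
lemma norm_sub_le_add_div_of_forall_norm_le (hσ : 0 < σ) (hL : ∀ u, σ * ‖u‖ ≤ ‖L.adjoint u‖)
    {β b : E} {y : F} (hy : L b = L β + y) (hb : ∀ b', L b' = L b → ‖b‖ ≤ ‖b'‖) :
    ‖b - β‖ ≤ ‖β‖ + ‖y‖ / σ := by
  have hsurj := surjective_comp_adjoint hσ hL
  obtain ⟨w, rfl⟩ := exists_adjoint_eq_of_forall_norm_le hsurj hb
  obtain ⟨z, rfl⟩ := hsurj y
  rw [LinearMap.comp_apply] at hy ⊢
  set k := β + L.adjoint z - L.adjoint w with hk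
  have hker : L k = 0 := by rw [hk, map_sub, map_add, hy, sub_self]
  have horth : ⟪L.adjoint (w - z), k⟫_ℝ = 0 := by
    rw [LinearMap.adjoint_inner_left, hker, inner_zero_right]
  have hpyth := norm_add_sq_eq_norm_sq_add_norm_sq_real horth
  rw [map_sub, show L.adjoint w - L.adjoint z + k = β by rw [hk]; abel] at hpyth
  have hkβ : ‖k‖ ≤ ‖β‖ :=
    (mul_self_le_mul_self_iff (norm_nonneg _) (norm_nonneg _)).2
      (hpyth ▸ le_add_of_nonneg_left (mul_self_nonneg _))
  calc ‖L.adjoint w - β‖ = ‖L.adjoint z - k‖ := by rw [hk]; congr 1; abel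
    _ ≤ ‖L.adjoint z‖ + ‖k‖ := norm_sub_le _ _
    _ ≤ ‖β‖ + ‖L (L.adjoint z)‖ / σ := by
      linarith [norm_adjoint_le_div hσ hL z]

end MinNormInterpolator

section WellConditioned

open scoped NNReal

variable {ι κ : Type*} [Fintype κ]

lemma norm_toLp_subtype_le (q : κ → Prop) [DecidablePred q] (e : EuclideanSpace ℝ κ) :
    ‖WithLp.toLp 2 fun j : {j // q j} => e j‖ ≤ ‖e‖ := by
  simp_rw [EuclideanSpace.norm_eq]
  refine Real.sqrt_le_sqrt ?_
  rw [← Fintype.sum_subtype_add_sum_subtype q fun j => ‖e j‖ ^ 2]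
  exact le_add_of_nonneg_right (by positivity)

lemma sqrt_sum_mul_sq_le {v : κ → ℝ≥0} {τ : ℝ} (hτ : 0 ≤ τ) (hv : ∀ j, (v j : ℝ) ≤ τ ^ 2)
    (e : EuclideanSpace ℝ κ) : √(∑ j, v j * e j ^ 2) ≤ τ * ‖e‖ := by
  refine Real.sqrt_le_iff.2 ⟨by positivity, ?_⟩
  rw [mul_pow, EuclideanSpace.real_norm_sq_eq, mul_sum]
  gcongr with j
  exact hv j

lemma sqrt_add_le_sqrt_add_sqrt {x y : ℝ} (hx : 0 ≤ x) (hy : 0 ≤ y) : √(x + y) ≤ √x + √y :=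
  Real.sqrt_le_iff.2 ⟨by positivity, by
    nlinarith [Real.sq_sqrt hx, Real.sq_sqrt hy, Real.sqrt_nonneg x, Real.sqrt_nonneg y]⟩

variable [DecidableEq κ]

lemma toEuclideanLin_eq_add_submatrix (A : Matrix ι κ ℝ) (q : κ → Prop) (e : EuclideanSpace ℝ κ) :
    toEuclideanLin A e =
      toEuclideanLin (A.submatrix id ((↑) : {j // q j} → κ)) (WithLp.toLp 2 fun j => e j) +
        toEuclideanLin (A.submatrix id ((↑) : {j // ¬ q j} → κ)) (WithLp.toLp 2 fun j => e j) := by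
  ext i
  simpa [mulVec, dotProduct] using (Fintype.sum_subtype_add_sum_subtype q fun j => A i j * e j).symm

variable [Fintype ι] [DecidableEq ι] {Z : Matrix ι κ ℝ} {v : κ → ℝ≥0} {R τ : ℝ}

/-- The properties of the design that determine the risk of minimum norm interpolation: `Z` holds
the design in the eigenbasis of the covariance, whose eigenvalues are `v`. The map `Zᵀ` is bounded
below, `Z` is bounded on the eigenspaces with eigenvalue at most `τ ^ 2`, and on the other ones it
dominates the prediction norm. -/
structure IsWellConditioned (Z : Matrix ι κ ℝ) (v : κ → ℝ≥0) (R τ : ℝ) : Prop where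
  le_norm_transpose : ∀ u, √R / 4 * ‖u‖ ≤ ‖toEuclideanLin Zᵀ u‖
  norm_tail_le : ∀ e, ‖toEuclideanLin (Z.submatrix id ((↑) : {j // (v j : ℝ) ≤ τ ^ 2} → κ)) e‖ ≤
    27 / 4 * (τ * √(Fintype.card ι)) * ‖e‖
  le_norm_head : ∀ e : EuclideanSpace ℝ {j // ¬ (v j : ℝ) ≤ τ ^ 2},
    √(Fintype.card ι) / 4 * √(∑ j, v j.1 * e j ^ 2) ≤
      ‖toEuclideanLin (Z.submatrix id ((↑) : {j // ¬ (v j : ℝ) ≤ τ ^ 2} → κ)) e‖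

lemma IsWellConditioned.sqrt_mul_predNorm_le (hZ : IsWellConditioned Z v R τ) (hτ : 0 < τ)
    {e : EuclideanSpace ℝ κ} (he : 64 * τ * ‖e‖ ≤ √(∑ j, v j * e j ^ 2)) :
    √(Fintype.card ι) * √(∑ j, v j * e j ^ 2) ≤ 8 * ‖toEuclideanLin Z e‖ := by
  set S := √(∑ j, v j * e j ^ 2)
  let eB : EuclideanSpace ℝ {j // (v j : ℝ) ≤ τ ^ 2} := WithLp.toLp 2 fun j => e j
  let eC : EuclideanSpace ℝ {j // ¬ (v j : ℝ) ≤ τ ^ 2} := WithLp.toLp 2 fun j => e j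
  have hS : S ≤ √(∑ j, v j.1 * eB j ^ 2) + √(∑ j, v j.1 * eC j ^ 2) := by
    refine le_trans (le_of_eq ?_) (sqrt_add_le_sqrt_add_sqrt (by positivity) (by positivity))
    exact congrArg _ (Fintype.sum_subtype_add_sum_subtype _ fun j => (v j : ℝ) * e j ^ 2).symm
  have hSB : √(∑ j, v j.1 * eB j ^ 2) ≤ τ * ‖eB‖ := sqrt_sum_mul_sq_le hτ.le (fun j => j.2) eB
  have hτeB : 64 * (τ * ‖eB‖) ≤ S := by
    refine le_trans ?_ he
    rw [mul_assoc]
    gcongr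
    exact norm_toLp_subtype_le _ e
  have hhead : 63 / 256 * (√(Fintype.card ι) * S) ≤
      ‖toEuclideanLin (Z.submatrix id Subtype.val) eC‖ :=
    calc 63 / 256 * (√(Fintype.card ι) * S) = √(Fintype.card ι) / 4 * (63 / 64 * S) := by ring
      _ ≤ √(Fintype.card ι) / 4 * √(∑ j, v j.1 * eC j ^ 2) := by gcongr; linarith
      _ ≤ _ := hZ.le_norm_head eC
  have htail : ‖toEuclideanLin (Z.submatrix id Subtype.val) eB‖ ≤
      27 / 256 * (√(Fintype.card ι) * S) :=
    calc _ ≤ 27 / 4 * (τ * √(Fintype.card ι)) * ‖eB‖ := hZ.norm_tail_le eB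
      _ = 27 / 256 * (√(Fintype.card ι) * (64 * (τ * ‖eB‖))) := by ring
      _ ≤ _ := by gcongr
  have hsum : ‖toEuclideanLin (Z.submatrix id Subtype.val) eC‖ -
      ‖toEuclideanLin (Z.submatrix id Subtype.val) eB‖ ≤ ‖toEuclideanLin Z e‖ := by
    rw [toEuclideanLin_eq_add_submatrix Z (fun j => (v j : ℝ) ≤ τ ^ 2) e, add_comm]
    exact norm_sub_le_norm_add _ _
  have hnonneg : 0 ≤ √(Fintype.card ι) * S := by positivity
  linarith

lemma IsWellConditioned.norm_sub_le (hZ : IsWellConditioned Z v R τ) (hR : 0 < R)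
    {β b : EuclideanSpace ℝ κ} {y : EuclideanSpace ℝ ι}
    (hy : toEuclideanLin Z b = toEuclideanLin Z β + y)
    (hb : ∀ b', toEuclideanLin Z b' = toEuclideanLin Z b → ‖b‖ ≤ ‖b'‖) :
    ‖b - β‖ ≤ ‖β‖ + 4 * ‖y‖ / √R := by
  have hadj : toEuclideanLin Zᵀ = (toEuclideanLin Z).adjoint := by
    rw [← toEuclideanLin_conjTranspose_eq_adjoint, conjTranspose_eq_transpose_of_trivial]
  have h := norm_sub_le_add_div_of_forall_norm_le (by positivity)
    (hadj ▸ hZ.le_norm_transpose) hy hb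
  rwa [div_div_eq_mul_div, mul_comm ‖y‖] at h

lemma IsWellConditioned.sum_mul_sub_sq_le [Nonempty ι] (hZ : IsWellConditioned Z v R τ)
    (hR : 0 < R) (hτ : 0 < τ) {β b : EuclideanSpace ℝ κ} {y : EuclideanSpace ℝ ι}
    (hy : toEuclideanLin Z b = toEuclideanLin Z β + y)
    (hb : ∀ b', toEuclideanLin Z b' = toEuclideanLin Z b → ‖b‖ ≤ ‖b'‖) :
    ∑ j, v j * (b - β) j ^ 2 ≤
      max (((‖β‖ + 4 * ‖y‖ / √R) * (64 * τ)) ^ 2) (64 * ‖y‖ ^ 2 / Fintype.card ι) := by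
  set S := √(∑ j, v j * (b - β) j ^ 2)
  have hS : ∑ j, v j * (b - β) j ^ 2 = S ^ 2 := (Real.sq_sqrt (by positivity)).symm
  rw [hS, le_max_iff]
  rcases le_total (64 * τ * ‖b - β‖) S with hlarge | hsmall
  · right
    have hnoise := hZ.sqrt_mul_predNorm_le hτ hlarge
    rw [map_sub, hy, add_sub_cancel_left] at hnoise
    rw [le_div_iff₀ (by positivity)]
    calc S ^ 2 * Fintype.card ι = (√(Fintype.card ι) * S) ^ 2 := by
          rw [mul_pow, Real.sq_sqrt (Nat.cast_nonneg _), mul_comm]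
      _ ≤ (8 * ‖y‖) ^ 2 := by gcongr
      _ = 64 * ‖y‖ ^ 2 := by ring
  · left
    have hdist := hZ.norm_sub_le hR hy hb
    gcongr
    calc S ≤ ‖b - β‖ * (64 * τ) := by rwa [mul_comm]
      _ ≤ _ := by gcongr

end WellConditioned

section ProbabilityWellConditioned

open scoped NNReal

variable {ι κ : Type*} [Fintype ι] [Fintype κ] {Ω : Type*} [MeasurableSpace Ω] {P : Measure Ω}
  {Z : Ω → ι → κ → ℝ} {v : κ → ℝ≥0} {b τ R : ℝ}

lemma hasLaw_submatrix_subtype (hZ : HasLaw Z (gaussianMatrix ι v) P) (q : κ → Prop)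
    [DecidablePred q] :
    HasLaw (fun ω i => Z ω i ∘ ((↑) : {j // q j} → κ)) (gaussianMatrix ι fun j => v j) P :=
  (measurePreserving_submatrix_gaussianMatrix v Subtype.val_injective).comp_hasLaw hZ

lemma measure_not_le_norm_head [DecidableEq κ] (hZ : HasLaw Z (gaussianMatrix ι v) P)
    (hhead : 48 * #{j | ¬ (v j : ℝ) ≤ τ ^ 2} ≤ Fintype.card ι) :
    P {ω | ¬ ∀ e : EuclideanSpace ℝ {j // ¬ (v j : ℝ) ≤ τ ^ 2},
        √(Fintype.card ι) / 4 * √(∑ j, v j.1 * e j ^ 2) ≤ ‖toEuclideanLin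
          ((of (Z ω)).submatrix id ((↑) : {j // ¬ (v j : ℝ) ≤ τ ^ 2} → κ)) e‖} ≤
      ENNReal.ofReal (2 * Real.exp (-(1 / 16) * Fintype.card ι)) := by
  refine (measure_not_sqrt_mul_norm_le_norm_toEuclideanLin
    (hasLaw_submatrix_subtype hZ fun j => ¬ (v j : ℝ) ≤ τ ^ 2) fun j =>
      NNReal.coe_pos.1 ((sq_nonneg τ).trans_lt (not_le.1 j.2))).trans ?_
  gcongr
  rw [Fintype.card_subtype]
  have : 48 * (#{j | ¬ (v j : ℝ) ≤ τ ^ 2} : ℝ) ≤ Fintype.card ι := mod_cast hhead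
  linarith

lemma measure_not_norm_tail_le [DecidableEq κ] (hZ : HasLaw Z (gaussianMatrix ι v) P) (hτ : 0 < τ)
    (htail : ∑ j with (v j : ℝ) ≤ τ ^ 2, (v j : ℝ) ≤ 9 * τ ^ 2 * Fintype.card ι) :
    P {ω | ¬ ∀ e, ‖toEuclideanLin ((of (Z ω)).submatrix id
        ((↑) : {j // (v j : ℝ) ≤ τ ^ 2} → κ)) e‖ ≤ 27 / 4 * (τ * √(Fintype.card ι)) * ‖e‖} ≤
      ENNReal.ofReal (Real.exp (-(1 / 16) * Fintype.card ι)) := by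
  have hsqrt : 9 / 4 * √(9 * τ ^ 2 * Fintype.card ι) = 27 / 4 * (τ * √(Fintype.card ι)) := by
    rw [Real.sqrt_mul (by positivity), show 9 * τ ^ 2 = (3 * τ) ^ 2 by ring,
      Real.sqrt_sq (by positivity)]
    ring
  have h := measure_not_norm_le_sqrt_mul_norm
    (hasLaw_submatrix_subtype hZ fun j => (v j : ℝ) ≤ τ ^ 2) (sq_pos_of_pos hτ) (fun j => j.2)
    ((sum_subtype _ (by simp) _).symm.trans_le htail)
  rw [hsqrt] at h
  refine h.trans ?_
  gcongr
  have : 9 * τ ^ 2 * Fintype.card ι / (2 * τ ^ 2) = 9 / 2 * (Fintype.card ι : ℝ) := by field_simp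
  linarith

variable [DecidableEq ι]

lemma norm_transpose_submatrix_le (A : Matrix ι κ ℝ) (q : κ → Prop) [DecidablePred q]
    (u : EuclideanSpace ℝ ι) :
    ‖toEuclideanLin (A.submatrix id ((↑) : {j // q j} → κ))ᵀ u‖ ≤ ‖toEuclideanLin Aᵀ u‖ :=
  norm_toLp_subtype_le q (toEuclideanLin Aᵀ u)

lemma measure_not_le_norm_transpose (hZ : HasLaw Z (gaussianMatrix ι v) P) (q : κ → Prop)
    [DecidablePred q] (hb : 0 < b) (hq : ∀ j, q j → v j ≤ b) (hR : R = ∑ j with q j, (v j : ℝ))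
    (hR' : 32 * b * Fintype.card ι ≤ R) :
    P {ω | ¬ ∀ u, √R / 4 * ‖u‖ ≤ ‖toEuclideanLin (of (Z ω))ᵀ u‖} ≤
      ENNReal.ofReal (2 * Real.exp (-(1 / 16) * Fintype.card ι)) := by
  refine (measure_mono fun ω => mt fun hle u => ?_).trans
    ((measure_not_sqrt_mul_norm_le_norm_transpose (hasLaw_submatrix_subtype hZ q) hb
      (fun j => hq j j.2) (hR.trans (sum_subtype _ (by simp) _))).trans ?_)
  · exact (hle u).trans (norm_transpose_submatrix_le (of (Z ω)) q u)
  · gcongr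
    have h4 : 4 * (Fintype.card ι : ℝ) ≤ R / (8 * b) := by
      rw [le_div_iff₀ (by positivity)]
      linarith
    linarith

variable [DecidableEq κ]

lemma measure_not_isWellConditioned_le (hZ : HasLaw Z (gaussianMatrix ι v) P) (q : κ → Prop)
    [DecidablePred q] (hb : 0 < b) (hq : ∀ j, q j → v j ≤ b) (hR : R = ∑ j with q j, (v j : ℝ))
    (hR' : 32 * b * Fintype.card ι ≤ R) (hτ : 0 < τ)
    (htail : ∑ j with (v j : ℝ) ≤ τ ^ 2, (v j : ℝ) ≤ 9 * τ ^ 2 * Fintype.card ι)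
    (hhead : 48 * #{j | ¬ (v j : ℝ) ≤ τ ^ 2} ≤ Fintype.card ι) :
    P {ω | ¬ IsWellConditioned (of (Z ω)) v R τ} ≤
      ENNReal.ofReal (5 * Real.exp (-(1 / 16) * Fintype.card ι)) := by
  set ε := Real.exp (-(1 / 16) * Fintype.card ι)
  have hsplit : ENNReal.ofReal (5 * ε) =
      ENNReal.ofReal (2 * ε) + (ENNReal.ofReal ε + ENNReal.ofReal (2 * ε)) := by
    rw [← ENNReal.ofReal_add (by positivity) (by positivity),
      ← ENNReal.ofReal_add (by positivity) (by positivity)]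
    ring_nf
  rw [hsplit]
  refine (measure_mono fun ω hω => ?_).trans <| (measure_union_le _ _).trans <|
    add_le_add (measure_not_le_norm_transpose hZ q hb hq hR hR') <|
      (measure_union_le _ _).trans <|
        add_le_add (measure_not_norm_tail_le hZ hτ htail) (measure_not_le_norm_head hZ hhead)
  by_contra hgood
  simp only [Set.mem_union, Set.mem_ofPred_eq, not_or, not_not] at hgood
  exact hω ⟨hgood.1, hgood.2.1, hgood.2.2⟩

end ProbabilityWellConditioned

section CriticalRadius

open scoped NNReal

variable {κ : Type*} [Fintype κ] {v : κ → ℝ≥0} {r τ : ℝ}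

lemma sum_filter_le_sum_min (hτ : 0 ≤ τ) (hτr : τ ≤ r) :
    ∑ j with (v j : ℝ) ≤ τ ^ 2, (v j : ℝ) ≤ ∑ j, min (v j : ℝ) (r ^ 2) := by
  rw [sum_filter]
  gcongr with j
  split_ifs with hj
  · exact le_min le_rfl (hj.trans (by gcongr))
  · positivity

lemma card_mul_sq_le_sum_min (hτ : 0 ≤ τ) (hτr : τ ≤ r) :
    #{j | ¬ (v j : ℝ) ≤ τ ^ 2} * τ ^ 2 ≤ ∑ j, min (v j : ℝ) (r ^ 2) := by
  rw [← nsmul_eq_mul, ← sum_const, sum_filter]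
  gcongr with j
  split_ifs with hj
  · positivity
  · exact le_min (not_le.1 hj).le (by gcongr)

/-- The eigenvalues of the covariance, as variances indexed by `Fin p`. -/
def eigenvalues (p : ℕ) (lam : ℕ → ℝ) (j : Fin p) : ℝ≥0 := (lam (j + 1)).toNNReal

variable {n p k : ℕ} {lam : ℕ → ℝ} {c0 η : ℝ}

lemma coe_eigenvalues (hnonneg : ∀ k, 1 ≤ k → k ≤ p → 0 ≤ lam k) (j : Fin p) :
    (eigenvalues p lam j : ℝ) = lam (j + 1) :=
  Real.coe_toNNReal _ (hnonneg _ (by omega) (by omega))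

lemma rsum_eq_sum_filter (lam : ℕ → ℝ) (hk : 1 ≤ k) :
    rsum p lam k = ∑ j ∈ univ.filter fun j : Fin p => k ≤ (j : ℕ) + 1, lam (j + 1) := by
  symm
  refine sum_bij (fun j _ => (j : ℕ) + 1) (fun j hj => ?_) (fun i _ j _ h => ?_)
    (fun i hi => ?_) fun _ _ => rfl
  · exact mem_Icc.2 ⟨(mem_filter.1 hj).2, j.2⟩
  · exact Fin.ext (by omega)
  · rw [mem_Icc] at hi
    exact ⟨⟨i - 1, by omega⟩, mem_filter.2 ⟨mem_univ _, by simp; omega⟩, by simp; omega⟩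

lemma pos_of_mem_kstarSet (hn : 0 < n) (hc0 : 0 < c0)
    (hnonneg : ∀ k, 1 ≤ k → k ≤ p → 0 ≤ lam k) (hk : k ∈ kstarSet p lam c0 n) : 0 < lam k := by
  refine (hnonneg k hk.1 hk.2.1).lt_of_ne' fun h0 => ?_
  have hle := hk.2.2
  rw [h0, div_zero] at hle
  exact hle.not_gt (by positivity)

lemma lt_sq_of_mem_kstarSet (hn : 0 < n) (hη : 0 < η) (hηc : η < c0)
    (hnonneg : ∀ k, 1 ≤ k → k ≤ p → 0 ≤ lam k)
    (hanti : ∀ j k, 1 ≤ j → j ≤ k → k ≤ p → lam k ≤ lam j) (hk : k ∈ kstarSet p lam c0 n)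
    {r : ℝ} (hr : 0 < r)
    (hsum : ∑ i : Fin p, min (lam ((i : ℕ) + 1)) (r ^ 2) ≤ η * n * r ^ 2) : lam k < r ^ 2 := by
  have hpos := pos_of_mem_kstarSet hn (hη.trans hηc) hnonneg hk
  by_contra! hle
  have hmin (i : Fin p) (hi : k ≤ (i : ℕ) + 1) :
      r ^ 2 / lam k * lam (i + 1) ≤ min (lam (i + 1)) (r ^ 2) := by
    have hi0 : 0 ≤ lam (i + 1) := hnonneg _ (by omega) (by omega)
    refine le_min (mul_le_of_le_one_left hi0 (div_le_one_of_le₀ hle hpos.le)) ?_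
    rw [div_mul_eq_mul_div, div_le_iff₀ hpos]
    gcongr
    exact hanti _ _ hk.1 hi (by omega)
  refine (mul_lt_mul_of_pos_right hηc (by positivity : 0 < (n : ℝ) * r ^ 2)).not_ge ?_
  calc c0 * (n * r ^ 2) = c0 * n * r ^ 2 := (mul_assoc _ _ _).symm
    _ ≤ rsum p lam k / lam k * r ^ 2 := by gcongr; exact hk.2.2
    _ = ∑ i ∈ univ.filter fun i : Fin p => k ≤ (i : ℕ) + 1, r ^ 2 / lam k * lam (i + 1) := by
      rw [rsum_eq_sum_filter lam hk.1, ← mul_sum]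
      ring
    _ ≤ ∑ i ∈ univ.filter fun i : Fin p => k ≤ (i : ℕ) + 1, min (lam (i + 1)) (r ^ 2) :=
      sum_le_sum fun i hi => hmin i (mem_filter.1 hi).2
    _ ≤ ∑ i : Fin p, min (lam (i + 1)) (r ^ 2) :=
      sum_le_sum_of_subset_of_nonneg (filter_subset _ _) fun i _ _ =>
        le_min (hnonneg _ (by omega) (by omega)) (sq_nonneg r)
    _ ≤ η * (n * r ^ 2) := by rwa [← mul_assoc]

lemma exists_sum_min_le (hn : 0 < n) (hη : 0 < η) (hnonneg : ∀ k, 1 ≤ k → k ≤ p → 0 ≤ lam k) :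
    ∃ r > 0, ∑ i : Fin p, min (lam ((i : ℕ) + 1)) (r ^ 2) ≤ η * n * r ^ 2 := by
  set L := ∑ i : Fin p, lam ((i : ℕ) + 1)
  have hL : 0 ≤ L := sum_nonneg fun i _ => hnonneg _ (by omega) (by omega)
  have hηn : 0 < η * n := by positivity
  refine ⟨√(L / (η * n) + 1), by positivity, ?_⟩
  rw [Real.sq_sqrt (by positivity)]
  calc ∑ i : Fin p, min (lam (i + 1)) (L / (η * n) + 1) ≤ L := sum_le_sum fun i _ => min_le_left _ _
    _ ≤ L + η * n := le_add_of_nonneg_right hηn.le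
    _ = η * n * (L / (η * n) + 1) := by field_simp

lemma rstar_pos_and_sum_min_le (hn : 0 < n) (hη : 0 < η) (hηc : η < c0)
    (hnonneg : ∀ k, 1 ≤ k → k ≤ p → 0 ≤ lam k)
    (hanti : ∀ j k, 1 ≤ j → j ≤ k → k ≤ p → lam k ≤ lam j)
    (hne : (kstarSet p lam c0 n).Nonempty) :
    0 < rstar p n lam η ∧ ∑ i : Fin p, min (lam ((i : ℕ) + 1)) (rstar p n lam η ^ 2) ≤
      η * n * rstar p n lam η ^ 2 := by
  obtain ⟨k, hk⟩ := hne
  set S := {r : ℝ | 0 < r ∧ ∑ i : Fin p, min (lam ((i : ℕ) + 1)) (r ^ 2) ≤ η * n * r ^ 2}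
  have hlow : ∀ r ∈ S, √(lam k) ≤ r := fun r hr =>
    Real.sqrt_le_iff.2 ⟨hr.1.le, (lt_sq_of_mem_kstarSet hn hη hηc hnonneg hanti hk hr.1 hr.2).le⟩
  have hS : S.Nonempty := exists_sum_min_le hn hη hnonneg
  have hpos : 0 < √(lam k) := Real.sqrt_pos.2 (pos_of_mem_kstarSet hn (hη.trans hηc) hnonneg hk)
  have hclosed : IsClosed {r : ℝ | ∑ i : Fin p, min (lam ((i : ℕ) + 1)) (r ^ 2) ≤ η * n * r ^ 2} :=
    isClosed_le (by fun_prop) (by fun_prop)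
  exact ⟨hpos.trans_le (le_csInf hS hlow),
    closure_minimal (fun r hr => hr.2) hclosed (csInf_mem_closure hS ⟨_, hlow⟩)⟩

end CriticalRadius

section Eigenbasis

variable {n p : ℕ} {lam : ℕ → ℝ} {Porth Sig : Matrix (Fin p) (Fin p) ℝ}

lemma transpose_mul_covHalf_mul_transpose (hP : Porth * Porthᵀ = 1) :
    Porthᵀ * covHalf p lam Porth * (Porthᵀ * covHalf p lam Porth)ᵀ =
      diagonal fun j => (eigenvalues p lam j : ℝ) := by
  have hP' : Porthᵀ * Porth = 1 := mul_eq_one_comm.1 hP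
  rw [covHalf, ← Matrix.mul_assoc, ← Matrix.mul_assoc, hP', Matrix.one_mul, transpose_mul,
    transpose_transpose, diagonal_transpose, Matrix.mul_assoc, ← Matrix.mul_assoc Porthᵀ, hP',
    Matrix.one_mul, diagonal_mul_diagonal]
  congr with j
  rw [eigenvalues, Real.sqrt, ← NNReal.coe_mul, NNReal.mul_self_sqrt]

lemma measurePreserving_vecMul_mvGaussian (hP : Porth * Porthᵀ = 1) :
    MeasurePreserving (· ᵥ* Porth) (mvGaussian p lam Porth)
      (Measure.pi fun j => gaussianReal 0 (eigenvalues p lam j)) := by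
  have hA : Porthᵀ * covHalf p lam Porth * diagonal (fun _ => ((1 : NNReal) : ℝ)) *
      (Porthᵀ * covHalf p lam Porth)ᵀ = diagonal fun j => (eigenvalues p lam j : ℝ) := by
    rw [NNReal.coe_one, diagonal_one, Matrix.mul_one, transpose_mul_covHalf_mul_transpose hP]
  refine ⟨by fun_prop, ?_⟩
  rw [mvGaussian, Measure.map_map (by fun_prop) (by fun_prop),
    ← (measurePreserving_mulVec_pi_gaussianReal hA).map_eq]
  congr 1
  ext g : 1
  rw [← mulVec_mulVec, mulVec_transpose, Function.comp_apply]

lemma isProbabilityMeasure_mvGaussian : IsProbabilityMeasure (mvGaussian p lam Porth) :=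
  Measure.isProbabilityMeasure_map (μ := Measure.pi fun _ => gaussianReal 0 1) (by fun_prop)

lemma hasLaw_vecMul_gaussianMatrix {Ω : Type*} [MeasurableSpace Ω] {P : Measure Ω}
    {X : Ω → Fin n → Fin p → ℝ} (hP : Porth * Porthᵀ = 1)
    (hX : P.map X = Measure.pi fun _ => mvGaussian p lam Porth) :
    HasLaw (fun ω i => X ω i ᵥ* Porth) (gaussianMatrix (Fin n) (eigenvalues p lam)) P := by
  have := isProbabilityMeasure_mvGaussian (lam := lam) (Porth := Porth)
  have hXm : AEMeasurable X P := AEMeasurable.of_map_ne_zero (hX ▸ IsProbabilityMeasure.ne_zero _)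
  exact (measurePreserving_pi _ _ fun _ => measurePreserving_vecMul_mvGaussian hP).comp_hasLaw
    ⟨hXm, hX⟩

lemma vecMul_dotProduct_vecMul (hP : Porth * Porthᵀ = 1) (x d : Fin p → ℝ) :
    (x ᵥ* Porth) ⬝ᵥ (d ᵥ* Porth) = x ⬝ᵥ d := by
  rw [← mulVec_transpose Porth d, dotProduct_mulVec, vecMul_vecMul, hP, vecMul_one]

lemma enorm2_eq_norm_toLp {m : ℕ} (x : Fin m → ℝ) : enorm2 x = ‖WithLp.toLp 2 x‖ := by
  simp [enorm2, EuclideanSpace.norm_eq]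

lemma enorm2_vecMul (hP : Porth * Porthᵀ = 1) (x : Fin p → ℝ) :
    enorm2 (x ᵥ* Porth) = enorm2 x := by
  have h := vecMul_dotProduct_vecMul hP x x
  simp only [dotProduct, ← sq] at h
  rw [enorm2, h, enorm2]

lemma IsMinInterp.vecMul {M : Fin n → Fin p → ℝ} {Y : Fin n → ℝ} {b : Fin p → ℝ}
    (hP : Porth * Porthᵀ = 1) (hb : IsMinInterp M Y b) :
    IsMinInterp (fun i => M i ᵥ* Porth) Y (b ᵥ* Porth) := by
  refine ⟨fun i => (vecMul_dotProduct_vecMul hP _ _).trans (hb.1 i), fun b' hb' => ?_⟩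
  have hb'' : b' ᵥ* Porthᵀ ᵥ* Porth = b' := by
    rw [vecMul_vecMul, mul_eq_one_comm.1 hP, vecMul_one]
  rw [← hb''] at hb' ⊢
  rw [enorm2_vecMul hP, enorm2_vecMul hP]
  exact hb.2 _ fun i => (vecMul_dotProduct_vecMul hP _ _).symm.trans (hb' i)

lemma predNorm_sq (hnonneg : ∀ k, 1 ≤ k → k ≤ p → 0 ≤ lam k)
    (hSig : Sig = Porth * Matrix.diagonal (fun i : Fin p => lam ((i : ℕ) + 1)) * Porthᵀ)
    (d : Fin p → ℝ) :
    predNorm Sig d ^ 2 = ∑ j, (eigenvalues p lam j : ℝ) * (d ᵥ* Porth) j ^ 2 := by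
  have h : d ⬝ᵥ Sig *ᵥ d = ∑ j, (eigenvalues p lam j : ℝ) * (d ᵥ* Porth) j ^ 2 := by
    rw [hSig, ← mulVec_mulVec, ← mulVec_mulVec, dotProduct_mulVec, mulVec_transpose]
    refine sum_congr rfl fun j _ => ?_
    rw [mulVec_diagonal, coe_eigenvalues hnonneg]
    ring
  rw [predNorm, Real.sq_sqrt, h]
  rw [h]
  positivity

lemma predNorm_sq_le_of_isWellConditioned (hn : 0 < n)
    (hnonneg : ∀ k, 1 ≤ k → k ≤ p → 0 ≤ lam k) (hP : Porth * Porthᵀ = 1)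
    (hSig : Sig = Porth * Matrix.diagonal (fun i : Fin p => lam ((i : ℕ) + 1)) * Porthᵀ)
    {M : Fin n → Fin p → ℝ} {R τ : ℝ} (hR : 0 < R) (hτ : 0 < τ)
    (hM : IsWellConditioned (of fun i => M i ᵥ* Porth) (eigenvalues p lam) R τ)
    {β b : Fin p → ℝ} {ξ : Fin n → ℝ} (hb : IsMinInterp M (fun i => (∑ j, M i j * β j) + ξ i) b) :
    predNorm Sig (fun j => b j - β j) ^ 2 ≤
      max (((enorm2 β + 4 * enorm2 ξ / √R) * (64 * τ)) ^ 2) (64 * enorm2 ξ ^ 2 / n) := by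
  have : Nonempty (Fin n) := ⟨⟨0, hn⟩⟩
  have hb' := hb.vecMul hP
  have hy : toEuclideanLin (of fun i => M i ᵥ* Porth) (WithLp.toLp 2 (b ᵥ* Porth)) =
      toEuclideanLin (of fun i => M i ᵥ* Porth) (WithLp.toLp 2 (β ᵥ* Porth)) +
        WithLp.toLp 2 ξ := by
    ext i
    exact (hb'.1 i).trans (congrArg (· + ξ i) (vecMul_dotProduct_vecMul hP (M i) β).symm)
  have h := hM.sum_mul_sub_sq_le hR hτ hy fun c hc => by
    rw [← enorm2_eq_norm_toLp]
    refine (hb'.2 c fun i => ?_).trans_eq (enorm2_eq_norm_toLp _)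
    exact (congrFun (congrArg WithLp.ofLp hc) i).trans (hb'.1 i)
  rw [predNorm_sq hnonneg hSig, show (fun j => b j - β j) = b - β from rfl, sub_vecMul]
  rwa [← enorm2_eq_norm_toLp, ← enorm2_eq_norm_toLp, enorm2_vecMul hP, Fintype.card_fin] at h

end Eigenbasis

section Risk

variable {n p : ℕ} {lam : ℕ → ℝ} {η : ℝ}

lemma rsum_pos_of_mem_kstarSet {c0 : ℝ} {k : ℕ} (hn : 0 < n) (hc0 : 0 < c0)
    (hnonneg : ∀ k, 1 ≤ k → k ≤ p → 0 ≤ lam k) (hk : k ∈ kstarSet p lam c0 n) :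
    0 < rsum p lam k := by
  have hpos := pos_of_mem_kstarSet hn hc0 hnonneg hk
  exact (div_pos_iff_of_pos_right hpos).1 ((by positivity : 0 < c0 * n).trans_le hk.2.2)

lemma measure_not_isWellConditioned_rstar_le {Porth : Matrix (Fin p) (Fin p) ℝ} (hn : 0 < n)
    (hnonneg : ∀ k, 1 ≤ k → k ≤ p → 0 ≤ lam k)
    (hanti : ∀ j k, 1 ≤ j → j ≤ k → k ≤ p → lam k ≤ lam j) (hP : Porth * Porthᵀ = 1)
    (hη : 0 < η) (hη0 : η ≤ 1 / 200000) {Ω : Type*} [MeasurableSpace Ω] {P : Measure Ω}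
    {X : Ω → Fin n → Fin p → ℝ} (hX : P.map X = Measure.pi fun _ => mvGaussian p lam Porth)
    (hne : (kstarSet p lam 32 n).Nonempty) :
    P {ω | ¬ IsWellConditioned (of fun i => X ω i ᵥ* Porth) (eigenvalues p lam)
        (rsum p lam (kstar p lam 32 n)) (rstar p n lam η / 64)} ≤
      ENNReal.ofReal (5 * Real.exp (-(1 / 16) * n)) := by
  have hk : kstar p lam 32 n ∈ kstarSet p lam 32 n := Nat.sInf_mem hne
  have hpos := pos_of_mem_kstarSet hn (by norm_num) hnonneg hk
  obtain ⟨hr, hsum⟩ := rstar_pos_and_sum_min_le hn hη (by linarith) hnonneg hanti hne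
  set k := kstar p lam 32 n
  set r := rstar p n lam η
  simp_rw [← coe_eigenvalues hnonneg] at hsum
  have hτ : 0 < r / 64 := by positivity
  have hτr : r / 64 ≤ r := by linarith
  have hsum' : ∑ j, min (eigenvalues p lam j : ℝ) (r ^ 2) ≤ n / 48 * (r / 64) ^ 2 :=
    hsum.trans <| calc η * n * r ^ 2 ≤ 1 / 200000 * n * r ^ 2 := by gcongr
      _ ≤ n / 48 * (r / 64) ^ 2 := by nlinarith [(by positivity : 0 ≤ n * r ^ 2)]
  rw [← Fintype.card_fin n] at hsum'
  refine (measure_not_isWellConditioned_le (hasLaw_vecMul_gaussianMatrix hP hX)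
    (fun j => k ≤ (j : ℕ) + 1) hpos (fun j hj => ?_) ?_ ?_ hτ ?_ ?_).trans_eq
    (by rw [Fintype.card_fin])
  · rw [coe_eigenvalues hnonneg]
    exact hanti _ _ hk.1 hj (by omega)
  · simp_rw [coe_eigenvalues hnonneg]
    exact rsum_eq_sum_filter lam hk.1
  · have := (le_div_iff₀ hpos).1 hk.2.2
    rw [Fintype.card_fin]
    linarith
  · refine (sum_filter_le_sum_min hτ.le hτr).trans (hsum'.trans ?_)
    nlinarith [(by positivity : 0 ≤ (Fintype.card (Fin n) : ℝ) * (r / 64) ^ 2)]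
  · have hcard := le_of_mul_le_mul_right ((card_mul_sq_le_sum_min hτ.le hτr).trans hsum')
      (sq_pos_of_pos hτ)
    rw [le_div_iff₀ (by norm_num)] at hcard
    rw [mul_comm]
    exact_mod_cast hcard

theorem stmt10_general {Porth Sig : Matrix (Fin p) (Fin p) ℝ} (hn : 0 < n)
    (hnonneg : ∀ k, 1 ≤ k → k ≤ p → 0 ≤ lam k)
    (hanti : ∀ j k, 1 ≤ j → j ≤ k → k ≤ p → lam k ≤ lam j) (hP : Porth * Porthᵀ = 1)
    (hSig : Sig = Porth * Matrix.diagonal (fun i : Fin p => lam ((i : ℕ) + 1)) * Porthᵀ)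
    (hη : 0 < η) (hη0 : η ≤ 1 / 200000) {Ω : Type*} [MeasurableSpace Ω] {P : Measure Ω}
    [IsProbabilityMeasure P] {X : Ω → Fin n → Fin p → ℝ}
    (hX : P.map X = Measure.pi fun _ => mvGaussian p lam Porth)
    (hne : (kstarSet p lam 32 n).Nonempty) :
    ENNReal.ofReal (1 - 5 * Real.exp (-(1 / 16) * n)) ≤ P {ω | ∀ βstar ξ b,
      IsMinInterp (X ω) (fun i => (∑ j, X ω i j * βstar j) + ξ i) b →
        predNorm Sig (fun j => b j - βstar j) ^ 2 ≤
          max ((rho p lam 32 n βstar (enorm2 ξ) * rstar p n lam η) ^ 2)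
            (64 * enorm2 ξ ^ 2 / n)} := by
  have hR := rsum_pos_of_mem_kstarSet hn (by norm_num) hnonneg (Nat.sInf_mem hne)
  have hr := (rstar_pos_and_sum_min_le hn hη (by linarith) hnonneg hanti hne).1
  have hbad := measure_not_isWellConditioned_rstar_le hn hnonneg hanti hP hη hη0 hX hne
  rw [ENNReal.ofReal_sub _ (by positivity), ENNReal.ofReal_one, tsub_le_iff_right,
    ← measure_univ (μ := P)]
  refine (measure_univ_le_add_compl _).trans
    (add_le_add_right ((measure_mono fun ω hω => ?_).trans hbad) _)
  refine fun hM => hω fun βstar ξ b hb => ?_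
  have h := predNorm_sq_le_of_isWellConditioned hn hnonneg hP hSig hR (by positivity) hM hb
  rwa [mul_div_cancel₀ _ (by norm_num : (64 : ℝ) ≠ 0)] at h

end Risk

/-- Theorem 4: in the model `Y = Xβ* + ξ` with `p ≥ n`, `k* ≤ c n`
and i.i.d. `N(0,Σ)` rows, there exist constants `c₁, c₂, c₃ > 0` such that if `η > 0`
is small enough, with probability at least `1 - c₁ e^{-c₂ n}`,
`‖Σ^{1/2}(β̂ - β*)‖₂² ≤ max((ρ r*(η))², c₃‖ξ‖₂²/n)`. -/
theorem stmt10 :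
    ∃ c0 > (0 : ℝ), ∃ c > (0 : ℝ),
    ∃ c1 > (0 : ℝ), ∃ c2 > (0 : ℝ), ∃ c3 > (0 : ℝ), ∃ η0 > (0 : ℝ),
    ∀ η : ℝ, 0 < η → η ≤ η0 →
    ∀ (n p : ℕ), 0 < n → n ≤ p →
    ∀ (lam : ℕ → ℝ) (Porth Sig : Matrix (Fin p) (Fin p) ℝ),
      (∀ k, 1 ≤ k → k ≤ p → 0 ≤ lam k) →
      (∀ j k, 1 ≤ j → j ≤ k → k ≤ p → lam k ≤ lam j) →
      Porth * Porthᵀ = 1 →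
      Sig = Porth * Matrix.diagonal (fun i : Fin p => lam ((i : ℕ) + 1)) * Porthᵀ →
      n ≤ Sig.rank →
    ∀ (Ω : Type) (_ : MeasurableSpace Ω) (P : Measure Ω), IsProbabilityMeasure P →
    ∀ (X : Ω → Fin n → Fin p → ℝ) (ξ : Ω → Fin n → ℝ) (βstar : Fin p → ℝ)
      (βhat : Ω → Fin p → ℝ),
      Measure.map X P = (Measure.pi fun _ : Fin n => mvGaussian p lam Porth) →
      (∀ᵐ ω ∂P, IsMinInterp (X ω)
        (fun i => (∑ j, X ω i j * βstar j) + ξ ω i) (βhat ω)) →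
      (kstarSet p lam c0 n).Nonempty → (kstar p lam c0 n : ℝ) ≤ c * n →
      ENNReal.ofReal (1 - c1 * Real.exp (-c2 * n)) ≤
        P {ω | predNorm Sig (fun j => βhat ω j - βstar j) ^ 2 ≤
               max ((rho p lam c0 n βstar (enorm2 (ξ ω)) * rstar p n lam η) ^ 2)
                   (c3 * enorm2 (ξ ω) ^ 2 / n)} := by
  refine ⟨32, by norm_num, 1, one_pos, 5, by norm_num, 1 / 16, by norm_num, 64, by norm_num,
    1 / 200000, by norm_num, ?_⟩
  intro η hη hη0 n p hn _ lam Porth Sig hnonneg hanti hP hSig _ Ω _ P _ X ξ βstar βhat hX hmin hne _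
  exact (stmt10_general hn hnonneg hanti hP hSig hη hη0 hX hne).trans
    (measure_mono_ae (hmin.mono fun ω hω hbound => hbound βstar (ξ ω) (βhat ω) hω))
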